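/- For every x ∈ [-1,1] the matrix W(x) is real symmetric and strictly positive definite. In particular the matrix-valued weight W(x)√(1-x²) is strictly positive definite for every x ∈ (-1,1). -/

import Mathlib

open Finset Polynomial MeasureTheory Matrix
open scoped BigOperators ComplexOrder

noncomputable section

/-- q-shifted factorial `(a;p)_n`. -/
def qp (a p : ℂ) (n : ℕ) : ℂ := ∏ j ∈ Finset.range n, (1 - a * p ^ j)

/-- q-Racah polynomial `R_n(μ(x);α,β,γ,δ;p)`. -/
def qRacah (p α β γ δ : ℂ) (n x : ℕ) : ℂ :=
  ∑ k ∈ Finset.range (min n x + 1),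
    qp (p ^ (-(n : ℤ))) p k * qp (α * β * p ^ (n + 1)) p k *
        qp (p ^ (-(x : ℤ))) p k * qp (γ * δ * p ^ (x + 1)) p k /
      (qp (α * p) p k * qp (β * δ * p) p k * qp (γ * p) p k * qp p p k) * p ^ k

/-- `IsUltra C` says that for each base `p`, parameter `β` and degree `n`, `C p β n` is
the continuous q-ultraspherical polynomial: it has degree at most `n` and its values at
`(z+z⁻¹)/2` are given by the symmetric Laurent sum. -/
def IsUltra (C : ℂ → ℂ → ℕ → Polynomial ℂ) : Prop :=
  ∀ (p β : ℂ) (n : ℕ),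
    (C p β n).degree ≤ (n : ℕ) ∧
      ∀ z : ℂ, z ≠ 0 →
        (C p β n).eval ((z + z⁻¹) / 2) =
          ∑ r ∈ Finset.range (n + 1),
            qp β p r * qp β p (n - r) / (qp p p r * qp p p (n - r)) * z ^ ((n : ℤ) - 2 * r)

/-- The matrix-valued polynomial `P_n` (entries in `Polynomial ℂ`); here `L = 2ℓ`. -/
def Pm (q : ℂ) (L : ℕ) (C : ℂ → ℂ → ℕ → Polynomial ℂ) (n : ℕ) :
    Matrix (Fin (L + 1)) (Fin (L + 1)) (Polynomial ℂ) :=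
  Matrix.of fun i j =>
    ∑ k ∈ Finset.Icc (i : ℕ) (min L (n + (j : ℕ))),
      Polynomial.C
          ((-1 : ℂ) ^ k *
            q ^ ((n : ℤ) + (2 * (k : ℤ) + 1) * ((k : ℤ) - ((i : ℕ) : ℤ)) +
                ((j : ℕ) : ℤ) * (2 * (k : ℤ) + 1) + 2 * (k : ℤ) * ((L : ℤ) + (n : ℤ) + 1) -
                (k : ℤ) ^ 2) *
            (qp (q ^ 2) (q ^ 2) k * qp (q ^ 2) (q ^ 2) (k + (i : ℕ)) /
              (qp (q ^ 2) (q ^ 2) (2 * k) * qp (q ^ 2) (q ^ 2) (i : ℕ))) *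
            (qp (q ^ (-(2 * (L : ℤ)))) (q ^ 2) k *
                qp (q ^ (-(2 * ((j : ℕ) : ℤ) + 2 * (n : ℤ)))) (q ^ 2) k /
              (qp (q ^ 2) (q ^ 2) k * qp (q ^ (2 * (L : ℤ) + 4)) (q ^ 2) k)) *
            (qp (q ^ 2) (q ^ 2) (n + (j : ℕ) - k) /
              qp (q ^ (4 * (k : ℤ) + 4)) (q ^ 2) (n + (j : ℕ) - k)) *
            qRacah (q ^ 2) 1 1 (q ^ (-(2 * (n : ℤ) + 2 * ((j : ℕ) : ℤ) + 2)))
              (q ^ (-(2 * (L : ℤ) + 2))) k (j : ℕ)) *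
        (C (q ^ 2) (q ^ (-(2 * (k : ℤ)))) (k - (i : ℕ)) *
          C (q ^ 2) (q ^ (2 * (k : ℤ) + 2)) (n + (j : ℕ) - k))

/-- Evaluation of the matrix-valued polynomial `P_n` at a point. -/
def evP (q : ℂ) (L : ℕ) (C : ℂ → ℂ → ℕ → Polynomial ℂ) (n : ℕ) (x : ℂ) :
    Matrix (Fin (L + 1)) (Fin (L + 1)) ℂ :=
  (Pm q L C n).map (Polynomial.eval x)

/-- The coefficients `α_t(m,n)` of the weight. -/
def alphaC (q : ℂ) (L m n t : ℕ) : ℂ :=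
  q ^ (2 * (n : ℤ) * ((L : ℤ) + 1) - (n : ℤ) ^ 2 - (2 * (L : ℤ) + 3) * (t : ℤ) + (t : ℤ) ^ 2 -
      (L : ℤ) + (m : ℤ)) *
    ((1 - q ^ (2 * (L : ℤ) + 2)) / (1 - q ^ (2 * (m : ℤ) + 2))) *
    (qp (q ^ 2) (q ^ 2) (L - n) * qp (q ^ 2) (q ^ 2) n / qp (q ^ 2) (q ^ 2) L) *
    ((-1 : ℂ) ^ ((m : ℤ) - (t : ℤ)) * qp (q ^ (2 * (m : ℤ) - 2 * (L : ℤ))) (q ^ 2) (n - t) /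
      qp (q ^ (2 * (m : ℤ) + 4)) (q ^ 2) (n - t)) *
    (qp (q ^ (2 * (L : ℤ) + 4 - 2 * (t : ℤ))) (q ^ 2) t / qp (q ^ 2) (q ^ 2) t)

/-- The matrix weight `W(x)`. -/
def Wm (q : ℂ) (L : ℕ) (x : ℂ) : Matrix (Fin (L + 1)) (Fin (L + 1)) ℂ :=
  Matrix.of fun i j =>
    ∑ t ∈ Finset.range (max (i : ℕ) (j : ℕ) + 1),
      alphaC q L (min (i : ℕ) (j : ℕ)) (max (i : ℕ) (j : ℕ)) t *
        (Polynomial.Chebyshev.U ℂ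
            ((min (i : ℕ) (j : ℕ) : ℤ) + (max (i : ℕ) (j : ℕ) : ℤ) - 2 * (t : ℤ))).eval x

/-- The antidiagonal involution `J`. -/
def Jm (L : ℕ) : Matrix (Fin (L + 1)) (Fin (L + 1)) ℂ :=
  Matrix.of fun i j => if (i : ℕ) + (j : ℕ) = L then 1 else 0

/-- The diagonal leading-coefficient matrix `Γ_n`. -/
def Gam (q : ℂ) (L n : ℕ) : Matrix (Fin (L + 1)) (Fin (L + 1)) ℂ :=
  Matrix.diagonal fun i =>
    2 ^ n * q ^ n * qp (q ^ (2 * ((i : ℕ) : ℤ) + 2)) (q ^ 2) n *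
        qp (q ^ (2 * (L : ℤ) - 2 * ((i : ℕ) : ℤ) + 2)) (q ^ 2) n /
      (qp (q ^ 2) (q ^ 2) n * qp (q ^ (2 * (L : ℤ) + 4)) (q ^ 2) n)

/-- The squared-norm matrix `G_m`. -/
def Gmat (q : ℂ) (L m : ℕ) : Matrix (Fin (L + 1)) (Fin (L + 1)) ℂ :=
  Matrix.diagonal fun i =>
    q ^ (2 * (m : ℤ) - (L : ℤ)) * (1 - q ^ (2 * (L : ℤ) + 2)) ^ 2 /
      ((1 - q ^ (2 * (m : ℤ) + 2 * ((i : ℕ) : ℤ) + 2)) *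
        (1 - q ^ (2 * (L : ℤ) - 2 * ((i : ℕ) : ℤ) + 2 * (m : ℤ) + 2)))

/-- The unipotent lower triangular matrix `L(x)` of the LDU decomposition. -/
def Lm (q : ℂ) (L : ℕ) (C : ℂ → ℂ → ℕ → Polynomial ℂ) (x : ℂ) :
    Matrix (Fin (L + 1)) (Fin (L + 1)) ℂ :=
  Matrix.of fun m k =>
    if (k : ℕ) ≤ (m : ℕ) then
      q ^ (((m : ℕ) : ℤ) - ((k : ℕ) : ℤ)) * qp (q ^ 2) (q ^ 2) (m : ℕ) *
          qp (q ^ 2) (q ^ 2) (2 * (k : ℕ) + 1) /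
          (qp (q ^ 2) (q ^ 2) ((m : ℕ) + (k : ℕ) + 1) * qp (q ^ 2) (q ^ 2) (k : ℕ)) *
        (C (q ^ 2) (q ^ (2 * (k : ℕ) + 2)) ((m : ℕ) - (k : ℕ))).eval x
    else 0

/-- The claimed inverse of `L(x)`. -/
def Linv (q : ℂ) (L : ℕ) (C : ℂ → ℂ → ℕ → Polynomial ℂ) (x : ℂ) :
    Matrix (Fin (L + 1)) (Fin (L + 1)) ℂ :=
  Matrix.of fun k n =>
    if (n : ℕ) ≤ (k : ℕ) then
      q ^ ((2 * ((k : ℕ) : ℤ) + 1) * (((k : ℕ) : ℤ) - ((n : ℕ) : ℤ))) *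
          qp (q ^ 2) (q ^ 2) (k : ℕ) * qp (q ^ 2) (q ^ 2) ((k : ℕ) + (n : ℕ)) /
          (qp (q ^ 2) (q ^ 2) (2 * (k : ℕ)) * qp (q ^ 2) (q ^ 2) (n : ℕ)) *
        (C (q ^ 2) (q ^ (-(2 * ((k : ℕ) : ℤ)))) ((k : ℕ) - (n : ℕ))).eval x
    else 0

/-- The constants `c_k(ℓ)`. -/
def ckC (q : ℂ) (L k : ℕ) : ℂ :=
  q ^ (-(L : ℤ)) / 4 * (1 - q ^ (4 * k + 2)) * qp (q ^ 2) (q ^ 2) (L + k + 1) *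
      qp (q ^ 2) (q ^ 2) (L - k) * qp (q ^ 2) (q ^ 2) k ^ 4 /
    (qp (q ^ 2) (q ^ 2) (2 * k + 1) ^ 2 * qp (q ^ 2) (q ^ 2) L ^ 2)

/-- The diagonal part `T(x)` of the LDU decomposition. -/
def Tm (q : ℂ) (L : ℕ) (x : ℂ) : Matrix (Fin (L + 1)) (Fin (L + 1)) ℂ :=
  Matrix.diagonal fun k =>
    ckC q L (k : ℕ) *
      (4 * ∏ j ∈ Finset.Icc 1 (k : ℕ), (1 - 2 * (2 * x ^ 2 - 1) * q ^ (2 * j) + q ^ (4 * j)))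

/-- The coefficient matrix `M₁(z)` of the q-difference operator `D₁`. -/
def M1f (q : ℂ) (L : ℕ) (z : ℂ) : Matrix (Fin (L + 1)) (Fin (L + 1)) ℂ :=
  Matrix.of fun i j =>
    if (j : ℕ) = (i : ℕ) + 1 then
      -(q ^ (1 - ((i : ℕ) : ℤ)) * (1 - q ^ (2 * (i : ℕ) + 2)) / (1 - q ^ 2) ^ 2 *
        (z / (1 - z ^ 2)))
    else if (j : ℕ) = (i : ℕ) then
      q ^ (1 - ((i : ℕ) : ℤ)) / (1 - q ^ 2) ^ 2 *
        ((1 - q ^ (2 * (i : ℕ) + 2) * z ^ 2) / (1 - z ^ 2))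
    else 0

/-- `M₂(z) = J M₁(z) J`. -/
def M2f (q : ℂ) (L : ℕ) (z : ℂ) : Matrix (Fin (L + 1)) (Fin (L + 1)) ℂ :=
  Jm L * M1f q L z * Jm L

/-- The eigenvalue matrix `Λ_n(1)`. -/
def Lam1 (q : ℂ) (L n : ℕ) : Matrix (Fin (L + 1)) (Fin (L + 1)) ℂ :=
  Matrix.diagonal fun j =>
    (q ^ (-((j : ℕ) : ℤ) - (n : ℤ) - 1) + q ^ (((j : ℕ) : ℤ) + (n : ℤ) + 1)) / (q⁻¹ - q) ^ 2

/-- The eigenvalue matrix `Λ_n(2) = J Λ_n(1) J`. -/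
def Lam2 (q : ℂ) (L n : ℕ) : Matrix (Fin (L + 1)) (Fin (L + 1)) ℂ :=
  Jm L * Lam1 q L n * Jm L

/-- The diagonal coefficient matrix `K₁(z)` of the decoupled operator. -/
def K1f (q : ℂ) (L : ℕ) (z : ℂ) : Matrix (Fin (L + 1)) (Fin (L + 1)) ℂ :=
  Matrix.diagonal fun i =>
    q ^ (1 - ((i : ℕ) : ℤ)) / (1 - q ^ 2) ^ 2 *
      ((1 - q ^ (2 * (i : ℕ) + 2) * z ^ 2) / (1 - z ^ 2))

/-- The symmetric Laurent polynomial `Ĉ_k(z;β|p)`. -/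
def Chat (p β : ℂ) (k : ℕ) (z : ℂ) : ℂ :=
  ∑ r ∈ Finset.range (k + 1),
    qp β p r * qp β p (k - r) / (qp p p r * qp p p (k - r)) * z ^ ((k : ℤ) - 2 * (r : ℤ))

/-- The matrix polynomials `R_n(x) = L(x)ᵀ P_n(x) Γ_n⁻¹`. -/
def Rmat (q : ℂ) (L : ℕ) (C : ℂ → ℂ → ℕ → Polynomial ℂ) (n : ℕ) (x : ℂ) :
    Matrix (Fin (L + 1)) (Fin (L + 1)) ℂ :=
  (Lm q L C x)ᵀ * evP q L C n x * (Gam q L n)⁻¹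

/-!
Conjugating by an invertible diagonal matrix turns the weight into `q^{-L}` times the matrix
`B(m,n) = ∑ t ≤ n, e_t e_{m+n+1-t} U_{m+n-2t}(x)`, where the `e_t` are the elementary symmetric
functions of `1, q², …, q^{2L}`: the `q`-binomial theorem evaluates them as the `q`-shifted
factorials in `α_t(m,n)`.

Let `E = ∏ (1 + a_j X)` be the generating polynomial of the `e_t` and write `2x = z + z⁻¹`. Then `B`
is the Bezoutian of `E(zX)` and `E(z⁻¹X)`. Exchanging `z` and `z⁻¹` in one factor of `E` at a time
gives the telescoping sum `B(m,n) = ∑ i, a_i p_i(z)_m p_i(z⁻¹)_n`, where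
`p_i(z) = ∏_{j<i} (1 + a_j z⁻¹ X) ∏_{j>i} (1 + a_j z X)`. For `x ∈ [-1,1]` we have `|z| = 1`, so
`p_i(z⁻¹)` is the complex conjugate of `p_i(z)`, and `B` is a Gram matrix with positive weights
`a_i`. It is definite because the `p_i(z)` are linearly independent: their values at the points
`-z/a_k` form a triangular matrix with nonzero diagonal. This includes `z = ±1`.
-/

section Chebyshev

variable {K : Type*} [Field K] {x z : K}

lemma chebyshev_U_eval_eq_mul_add_zpow (hz : z ≠ 0) (hx : 2 * x = z + z⁻¹) (k : ℤ) :
    (Chebyshev.U K k).eval x = z * (Chebyshev.U K (k - 1)).eval x + z ^ (-k) := by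
  have recurrence (k : ℤ) : (Chebyshev.U K (k + 1)).eval x =
      (z + z⁻¹) * (Chebyshev.U K k).eval x - (Chebyshev.U K (k - 1)).eval x := by
    rw [Chebyshev.U_add_one, ← hx]
    simp
  have hzz : z * z⁻¹ = 1 := mul_inv_cancel₀ hz
  induction k using Int.induction_on with
  | zero => simp
  | succ i ih =>
    have hpow : z ^ (-((i : ℤ) + 1)) = z⁻¹ * z ^ (-(i : ℤ)) := by
      rw [neg_add_rev, zpow_add₀ hz, _root_.zpow_neg_one]
    rw [recurrence, add_sub_cancel_right, hpow]
    linear_combination z⁻¹ * ih + (Chebyshev.U K ((i : ℤ) - 1)).eval x * hzz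
  | pred i ih =>
    have hpow : z ^ (-(-(i : ℤ) - 1)) = z * z ^ (-(-(i : ℤ))) := by
      rw [neg_sub', zpow_sub₀ hz, _root_.zpow_neg_one, div_inv_eq_mul, mul_comm]
    have h := recurrence (-(i : ℤ) - 1)
    rw [sub_add_cancel] at h
    rw [hpow]
    linear_combination z * ih - z * h - (Chebyshev.U K (-(i : ℤ) - 1)).eval x * hzz

end Chebyshev

section ElementarySymmetric

variable {R : Type*} [CommSemiring R]

/-- The generating polynomial `∏_{j < N} (1 + a_j X)` of the elementary symmetric functions of
`a_0, …, a_{N-1}`. -/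
def esymmGen (a : ℕ → R) (N : ℕ) : R[X] := ∏ j ∈ range N, (1 + C (a j) * X)

lemma esymmGen_succ (a : ℕ → R) (N : ℕ) :
    esymmGen a (N + 1) = (1 + C (a N) * X) * esymmGen a N := by
  rw [esymmGen, prod_range_succ, mul_comm, esymmGen]

lemma coeff_one_add_C_mul_X_mul (c : R) (p : R[X]) (m : ℕ) :
    ((1 + C c * X) * p).coeff m = p.coeff m + c * (X * p).coeff m := by
  rw [add_mul, one_mul, mul_assoc, coeff_add, coeff_C_mul]

lemma coeff_zero_esymmGen (a : ℕ → R) (N : ℕ) : (esymmGen a N).coeff 0 = 1 := by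
  simp [esymmGen, coeff_zero_prod]

lemma coeff_esymmGen_mul_right (a : ℕ → R) (z : R) (N t : ℕ) :
    (esymmGen (fun j ↦ a j * z) N).coeff t = (esymmGen a N).coeff t * z ^ t := by
  have hcomp : esymmGen (fun j ↦ a j * z) N = (esymmGen a N).comp (C z * X) := by
    simp [esymmGen, Polynomial.prod_comp, mul_assoc]
  rw [hcomp, comp_C_mul_X_coeff]

end ElementarySymmetric

section Bezoutian

variable {ι R : Type*} [CommRing R]

/-- The coefficient of `X ^ m * Y ^ n` in `(X - Y) * f(X) * g(Y)`. -/
def coeffSubMul (f g : R[X]) (m n : ℕ) : R :=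
  (X * f).coeff m * g.coeff n - f.coeff m * (X * g).coeff n

lemma coeffSubMul_one_add_C_mul_X_mul (c d : R) (f g : R[X]) (m n : ℕ) :
    coeffSubMul ((1 + C c * X) * f) ((1 + C d * X) * g) m n =
      coeffSubMul f g m n + c * coeffSubMul (X * f) g m n + d * coeffSubMul f (X * g) m n +
        c * d * coeffSubMul (X * f) (X * g) m n := by
  simp only [coeffSubMul, mul_left_comm X (1 + _), coeff_one_add_C_mul_X_mul]
  ring

lemma sum_coeffSubMul_X_mul_left {s : Finset ι} {a : ι → R} {p r : ι → R[X]} {e f : R[X]}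
    {u : ℤ → R}
    (h : ∀ m n : ℕ, ∑ i ∈ s, a i * coeffSubMul (p i) (r i) m n =
      e.coeff m * f.coeff n * u (m - n)) (m n : ℕ) :
    ∑ i ∈ s, a i * coeffSubMul (X * p i) (r i) m n =
      (X * e).coeff m * f.coeff n * u (m - n - 1) := by
  cases m with
  | zero => simp [coeffSubMul]
  | succ m =>
    simp only [coeffSubMul, coeff_X_mul] at h ⊢
    rw [h]
    congr 2
    push_cast
    ring

lemma sum_coeffSubMul_X_mul_right {s : Finset ι} {a : ι → R} {p r : ι → R[X]} {e f : R[X]}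
    {u : ℤ → R}
    (h : ∀ m n : ℕ, ∑ i ∈ s, a i * coeffSubMul (p i) (r i) m n =
      e.coeff m * f.coeff n * u (m - n)) (m n : ℕ) :
    ∑ i ∈ s, a i * coeffSubMul (p i) (X * r i) m n =
      e.coeff m * (X * f).coeff n * u (m - n + 1) := by
  cases n with
  | zero => simp [coeffSubMul]
  | succ n =>
    simp only [coeffSubMul, coeff_X_mul] at h ⊢
    rw [h]
    congr 2
    push_cast
    ring

lemma sum_coeffSubMul_one_add_C_mul_X_mul {s : Finset ι} {a : ι → R} {p r : ι → R[X]}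
    {e f : R[X]} {u : ℤ → R}
    (h : ∀ m n : ℕ, ∑ i ∈ s, a i * coeffSubMul (p i) (r i) m n =
      e.coeff m * f.coeff n * u (m - n)) (c d : R) (m n : ℕ) :
    ∑ i ∈ s, a i * coeffSubMul ((1 + C c * X) * p i) ((1 + C d * X) * r i) m n =
      e.coeff m * f.coeff n * u (m - n) + c * ((X * e).coeff m * f.coeff n * u (m - n - 1)) +
        d * (e.coeff m * (X * f).coeff n * u (m - n + 1)) +
          c * d * ((X * e).coeff m * (X * f).coeff n * u (m - n)) := by
  have hboth := sum_coeffSubMul_X_mul_left (u := fun k ↦ u (k + 1))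
    (sum_coeffSubMul_X_mul_right h) m n
  rw [sub_add_cancel] at hboth
  rw [← h, ← sum_coeffSubMul_X_mul_left h, ← sum_coeffSubMul_X_mul_right h, ← hboth]
  simp only [coeffSubMul_one_add_C_mul_X_mul, mul_sum, ← sum_add_distrib]
  exact sum_congr rfl fun i _ ↦ by ring

/-- The coefficient of `X ^ m * Y ^ n` in the Bezoutian
`(f(zX) f(z⁻¹Y) - f(z⁻¹X) f(zY)) / ((z - z⁻¹) (X - Y))`, where `2 * x = z + z⁻¹`. -/
def chebBezoutian (f : R[X]) (x : R) (m n : ℕ) : R :=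
  ∑ t ∈ range (n + 1),
    f.coeff t * f.coeff (m + n + 1 - t) * (Chebyshev.U R ((m : ℤ) + n - 2 * t)).eval x

lemma chebBezoutian_succ_right (f : R[X]) (x : R) (m n : ℕ) :
    chebBezoutian f x m (n + 1) = chebBezoutian f x (m + 1) n +
      f.coeff (m + 1) * f.coeff (n + 1) * (Chebyshev.U R ((m : ℤ) - n - 1)).eval x := by
  rw [chebBezoutian, sum_range_succ, chebBezoutian]
  congr 1
  · refine sum_congr rfl fun t _ ↦ ?_
    rw [show m + (n + 1) + 1 - t = m + 1 + n + 1 - t by lia,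
      show (m : ℤ) + (n + 1 : ℕ) - 2 * t = (m + 1 : ℕ) + n - 2 * t by push_cast; ring]
  · rw [show m + (n + 1) + 1 - (n + 1) = m + 1 by lia, mul_comm (f.coeff (n + 1)),
      show (m : ℤ) + (n + 1 : ℕ) - 2 * (n + 1 : ℕ) = m - n - 1 by push_cast; ring]

variable {K : Type*} [Field K] {x z : K}

/-- The product `∏_{j < N} (1 + a_j z X)` with its `i`-th factor deleted and `z` replaced by `z⁻¹`
in the factors before it. The polynomials for `i < N` diagonalize the Bezoutian `chebBezoutian`. -/
def mixedProd (a : ℕ → K) (z : K) (N i : ℕ) : K[X] :=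
  (∏ j ∈ range i, (1 + C (a j * z⁻¹) * X)) * ∏ j ∈ Ico (i + 1) N, (1 + C (a j * z) * X)

lemma mixedProd_succ_of_lt (a : ℕ → K) (z : K) {N i : ℕ} (h : i < N) :
    mixedProd a z (N + 1) i = (1 + C (a N * z) * X) * mixedProd a z N i := by
  rw [mixedProd, mixedProd, prod_Ico_succ_top h]
  ring

lemma mixedProd_succ_self (a : ℕ → K) (z : K) (N : ℕ) :
    mixedProd a z (N + 1) N = esymmGen (fun j ↦ a j * z⁻¹) N := by
  simp [mixedProd, esymmGen]

lemma coeff_X_mul_esymmGen_mul_right (a : ℕ → K) (N t : ℕ) :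
    (X * esymmGen (fun j ↦ a j * z) N).coeff t =
      (X * esymmGen a N).coeff t * z ^ ((t : ℤ) - 1) := by
  cases t with
  | zero => simp
  | succ t => simp [coeff_X_mul, coeff_esymmGen_mul_right]

lemma coeffSubMul_esymmGen_mul_right (a : ℕ → K) (hz : z ≠ 0) (N m n : ℕ) :
    coeffSubMul (esymmGen (fun j ↦ a j * z⁻¹) N) (esymmGen (fun j ↦ a j * z) N) m n =
      (X * esymmGen a N).coeff m * (esymmGen a N).coeff n * z ^ (-((m : ℤ) - n - 1)) -
        (esymmGen a N).coeff m * (X * esymmGen a N).coeff n * z ^ (-((m : ℤ) - n + 1)) := by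
  have hleft : z ^ (-((m : ℤ) - n - 1)) = z⁻¹ ^ ((m : ℤ) - 1) * z ^ n := by
    rw [_root_.inv_zpow', ← zpow_natCast, ← zpow_add₀ hz]
    congr 1
    ring
  have hright : z ^ (-((m : ℤ) - n + 1)) = z⁻¹ ^ m * z ^ ((n : ℤ) - 1) := by
    rw [← zpow_natCast, _root_.inv_zpow', ← zpow_add₀ hz]
    congr 1
    ring
  rw [coeffSubMul, coeff_X_mul_esymmGen_mul_right, coeff_X_mul_esymmGen_mul_right,
    coeff_esymmGen_mul_right, coeff_esymmGen_mul_right, hleft, hright]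
  ring

lemma sum_coeffSubMul_mixedProd (a : ℕ → K) (hz : z ≠ 0) (hx : 2 * x = z + z⁻¹) (N m n : ℕ) :
    ∑ i ∈ range N, a i * coeffSubMul (mixedProd a z N i) (mixedProd a z⁻¹ N i) m n =
      (esymmGen a N).coeff m * (esymmGen a N).coeff n *
        (Chebyshev.U K ((m : ℤ) - n - 1)).eval x := by
  induction N generalizing m n with
  | zero =>
    rcases m with _ | m <;> rcases n with _ | n <;>
      simp [esymmGen, coeff_one]
  | succ N ih =>
    let u (k : ℤ) : K := (Chebyshev.U K (k - 1)).eval x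
    have hu (k : ℤ) : u (k + 1) = z * u k + z ^ (-k) := by
      simpa [u] using chebyshev_U_eval_eq_mul_add_zpow hz hx k
    have hzz : z * z⁻¹ = 1 := mul_inv_cancel₀ hz
    have hpow : z ^ (-((m : ℤ) - n + 1)) = z⁻¹ * z ^ (-((m : ℤ) - n)) := by
      rw [neg_add_rev, zpow_add₀ hz, _root_.zpow_neg_one]
    have hpred : u (m - n) = z * u (m - n - 1) + z ^ (-((m : ℤ) - n - 1)) := by
      rw [← hu, sub_add_cancel]
    have hsum : ∑ i ∈ range N,
        a i * coeffSubMul (mixedProd a z (N + 1) i) (mixedProd a z⁻¹ (N + 1) i) m n =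
          ∑ i ∈ range N, a i * coeffSubMul ((1 + C (a N * z) * X) * mixedProd a z N i)
            ((1 + C (a N * z⁻¹) * X) * mixedProd a z⁻¹ N i) m n :=
      sum_congr rfl fun i hi ↦ by
        rw [mixedProd_succ_of_lt a z (mem_range.mp hi),
          mixedProd_succ_of_lt a z⁻¹ (mem_range.mp hi)]
    rw [sum_range_succ, hsum, sum_coeffSubMul_one_add_C_mul_X_mul (u := u) ih,
      mixedProd_succ_self, mixedProd_succ_self, inv_inv, coeffSubMul_esymmGen_mul_right a hz, hpow,
      hu, esymmGen_succ, coeff_one_add_C_mul_X_mul, coeff_one_add_C_mul_X_mul]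
    set E := esymmGen a N
    change _ = _ * u (m - n)
    linear_combination
      -(a N * (X * E).coeff m * E.coeff n) * hpred + (a N * E.coeff m * (X * E).coeff n +
        a N ^ 2 * (X * E).coeff m * (X * E).coeff n) * u (m - n) * hzz

lemma sum_mixedProd_eq_chebBezoutian (a : ℕ → K) (hz : z ≠ 0) (hx : 2 * x = z + z⁻¹)
    (N m n : ℕ) :
    ∑ i ∈ range N, a i * ((mixedProd a z N i).coeff m * (mixedProd a z⁻¹ N i).coeff n) =
      chebBezoutian (esymmGen a N) x m n := by
  induction n generalizing m with
  | zero =>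
    have h := sum_coeffSubMul_mixedProd a hz hx N (m + 1) 0
    simpa [coeffSubMul, chebBezoutian, coeff_zero_esymmGen] using h
  | succ n ih =>
    have h := sum_coeffSubMul_mixedProd a hz hx N (m + 1) (n + 1)
    simp only [coeffSubMul, coeff_X_mul, mul_sub, sum_sub_distrib, ih] at h
    rw [chebBezoutian_succ_right, ← sub_eq_iff_eq_add', h]
    push_cast
    ring_nf

lemma chebBezoutian_esymmGen_comm (a : ℕ → K) (hz : z ≠ 0) (hx : 2 * x = z + z⁻¹)
    (N m n : ℕ) :
    chebBezoutian (esymmGen a N) x m n = chebBezoutian (esymmGen a N) x n m := by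
  have hx' : 2 * x = z⁻¹ + z⁻¹⁻¹ := by rw [hx, inv_inv, add_comm]
  rw [← sum_mixedProd_eq_chebBezoutian a hz hx, ← sum_mixedProd_eq_chebBezoutian a (inv_ne_zero hz)
    hx', inv_inv]
  exact sum_congr rfl fun i _ ↦ by ring

lemma natDegree_mixedProd_lt (a : ℕ → K) (z : K) {N i : ℕ} (hi : i < N) :
    (mixedProd a z N i).natDegree < N := by
  have hlinear (s : Finset ℕ) (c : ℕ → K) :
      (∏ j ∈ s, (1 + C (c j) * X)).natDegree ≤ #s := by
    refine (natDegree_prod_le s _).trans ((sum_le_card_nsmul s _ 1 fun j _ ↦ ?_).trans_eq ?_)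
    · compute_degree
    · simp
  calc (mixedProd a z N i).natDegree
      ≤ #(range i) + #(Ico (i + 1) N) :=
        natDegree_mul_le.trans (add_le_add (hlinear _ _) (hlinear _ _))
    _ < N := by rw [card_range, Nat.card_Ico]; lia

lemma eval_mixedProd (a : ℕ → K) (z y : K) (N i : ℕ) :
    (mixedProd a z N i).eval y =
      (∏ j ∈ range i, (1 + a j * z⁻¹ * y)) * ∏ j ∈ Ico (i + 1) N, (1 + a j * z * y) := by
  simp [mixedProd, eval_prod]

lemma map_mixedProd {F : Type*} [Field F] (f : K →+* F) (a : ℕ → K) (z : K) (N i : ℕ) :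
    (mixedProd a z N i).map f = mixedProd (fun j ↦ f (a j)) (f z) N i := by
  simp [mixedProd, Polynomial.map_prod]

end Bezoutian

section PosDef

lemma det_coeff_ne_zero_of_eval {R : Type*} [CommRing R] [IsDomain R] {n : ℕ} (p : Fin n → R[X])
    (y : Fin n → R) (hdeg : ∀ i, (p i).natDegree < n)
    (hzero : ∀ i k, k < i → (p i).eval (y k) = 0) (hne : ∀ i, (p i).eval (y i) ≠ 0) :
    (Matrix.of fun i m : Fin n ↦ (p i).coeff m).det ≠ 0 := by
  have hmul : (Matrix.of fun i m : Fin n ↦ (p i).coeff m) * (vandermonde y)ᵀ =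
      Matrix.of fun i k ↦ (p i).eval (y k) := by
    ext i k
    simp only [Matrix.mul_apply, Matrix.of_apply, Matrix.transpose_apply, vandermonde_apply]
    rw [eval_eq_sum_range' (hdeg i),
      Fin.sum_univ_eq_sum_range (fun m ↦ (p i).coeff m * y k ^ m)]
  have htri : (Matrix.of fun i k ↦ (p i).eval (y k)).IsUpperTriangular :=
    fun i k hki ↦ hzero i k hki
  have hdet : (Matrix.of fun i k ↦ (p i).eval (y k)).det ≠ 0 := by
    rw [det_of_isUpperTriangular htri]
    exact prod_ne_zero_iff.mpr fun i _ ↦ hne i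
  rw [← hmul, det_mul] at hdet
  exact left_ne_zero_of_mul hdet

variable {z : ℂ} {a : ℕ → ℝ}

lemma one_sub_ofReal_div_mul_ne_zero (hz : ‖z‖ = 1) {b c : ℝ} (hb : 0 < b) (hc : 0 < c)
    (hbc : b ≠ c) : 1 - (b : ℂ) / c * z ≠ 0 := by
  intro h
  have hnorm : ‖(b : ℂ) / c * z‖ = 1 := by rw [← sub_eq_zero.mp h, norm_one]
  rw [norm_mul, hz, mul_one, norm_div, Complex.norm_of_nonneg hb.le, Complex.norm_of_nonneg hc.le,
    div_eq_one_iff_eq hc.ne'] at hnorm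
  exact hbc hnorm

lemma det_mixedProd_ne_zero (ha : ∀ i, 0 < a i) (ha' : a.Injective) (hz : ‖z‖ = 1) (N : ℕ) :
    (Matrix.of fun i m : Fin N ↦ (mixedProd (fun j ↦ (a j : ℂ)) z N i).coeff m).det ≠ 0 := by
  have hz0 : z ≠ 0 := norm_ne_zero_iff.mp (hz ▸ one_ne_zero)
  have ha0 (i : ℕ) : (a i : ℂ) ≠ 0 := Complex.ofReal_ne_zero.mpr (ha i).ne'
  refine det_coeff_ne_zero_of_eval _ (fun k ↦ -(z / a k))
    (fun i ↦ natDegree_mixedProd_lt _ _ i.isLt) (fun i k hki ↦ ?_) (fun i ↦ ?_)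
  · rw [eval_mixedProd, prod_eq_zero (mem_range.mpr hki), zero_mul]
    field_simp [hz0, ha0]
    ring
  · rw [eval_mixedProd]
    refine mul_ne_zero (prod_ne_zero_iff.mpr fun j hj ↦ ?_) (prod_ne_zero_iff.mpr fun j hj ↦ ?_)
    · have hji : j ≠ i := (mem_range.mp hj).ne
      convert one_sub_ofReal_div_mul_ne_zero norm_one (ha j) (ha i) (ha'.ne hji) using 1
      field_simp [hz0, ha0]
      ring
    · have hji : j ≠ i := (Nat.lt_of_succ_le (mem_Ico.mp hj).1).ne'
      convert one_sub_ofReal_div_mul_ne_zero (z := z ^ 2) (by simp [hz]) (ha j) (ha i)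
        (ha'.ne hji) using 1
      field_simp [ha0]
      ring

lemma star_coeff_mixedProd_inv (a : ℕ → ℝ) (hz : ‖z‖ = 1) (N i m : ℕ) :
    star ((mixedProd (fun j ↦ (a j : ℂ)) z⁻¹ N i).coeff m) =
      (mixedProd (fun j ↦ (a j : ℂ)) z N i).coeff m := by
  rw [← starRingEnd_apply, ← coeff_map, map_mixedProd, Complex.inv_eq_conj hz]
  simp

lemma exists_norm_eq_one_two_mul_eq_add_inv {x : ℝ} (hx₁ : -1 ≤ x) (hx₂ : x ≤ 1) :
    ∃ z : ℂ, ‖z‖ = 1 ∧ 2 * (x : ℂ) = z + z⁻¹ := by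
  refine ⟨Complex.exp (Real.arccos x * Complex.I), Complex.norm_exp_ofReal_mul_I _, ?_⟩
  rw [← Complex.exp_neg, ← neg_mul, ← Complex.two_cos, ← Complex.ofReal_cos,
    Real.cos_arccos hx₁ hx₂]

theorem posDef_chebBezoutian_esymmGen (ha : ∀ i, 0 < a i) (ha' : a.Injective) {x : ℝ}
    (hx₁ : -1 ≤ x) (hx₂ : x ≤ 1) (N : ℕ) :
    (Matrix.of fun m n : Fin N ↦
      chebBezoutian (esymmGen (fun j ↦ (a j : ℂ)) N) (x : ℂ) m n).PosDef := by
  obtain ⟨z, hz, hxz⟩ := exists_norm_eq_one_two_mul_eq_add_inv hx₁ hx₂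
  have hz0 : z ≠ 0 := norm_ne_zero_iff.mp (hz ▸ one_ne_zero)
  let H : Matrix (Fin N) (Fin N) ℂ :=
    Matrix.of fun i m ↦ (mixedProd (fun j ↦ (a j : ℂ)) z⁻¹ N i).coeff m
  have hfactor : (Matrix.of fun m n : Fin N ↦
      chebBezoutian (esymmGen (fun j ↦ (a j : ℂ)) N) (x : ℂ) m n) =
        Hᴴ * diagonal (fun i : Fin N ↦ (a i : ℂ)) * H := by
    ext m n
    rw [Matrix.of_apply, ← sum_mixedProd_eq_chebBezoutian _ hz0 hxz, ← Fin.sum_univ_eq_sum_range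
      (fun i ↦ (a i : ℂ) * ((mixedProd (fun j ↦ (a j : ℂ)) z N i).coeff m *
        (mixedProd (fun j ↦ (a j : ℂ)) z⁻¹ N i).coeff n)), Matrix.mul_apply]
    refine sum_congr rfl fun i _ ↦ ?_
    rw [mul_diagonal, conjTranspose_apply,
      show star (H i m) = _ from star_coeff_mixedProd_inv a hz N i m]
    simp only [H, Matrix.of_apply]
    ring
  have hH : IsUnit H.det := (det_mixedProd_ne_zero ha ha' (by simp [hz]) N).isUnit
  rw [hfactor]
  exact PosDef.conjTranspose_mul_mul_same (PosDef.diagonal fun i ↦ by simpa using ha i)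
    (mulVec_injective_of_isUnit ((isUnit_iff_isUnit_det H).mpr hH))

end PosDef

section QShiftedFactorial

lemma qp_succ (a p : ℂ) (n : ℕ) : qp a p (n + 1) = qp a p n * (1 - a * p ^ n) :=
  prod_range_succ _ n

lemma qp_mul_qp (a p : ℂ) (m n : ℕ) : qp a p m * qp (a * p ^ m) p n = qp a p (m + n) := by
  simp only [qp, prod_range_add, pow_add, mul_assoc]

lemma star_qp (a p : ℂ) (n : ℕ) : star (qp a p n) = qp (star a) (star p) n := by
  simp [qp]

lemma qp_eq_mul_qp_inv {a p : ℂ} (ha : a ≠ 0) (hp : p ≠ 0) (n : ℕ) :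
    qp a p n = (-a) ^ n * p ^ (n.choose 2) * qp (a⁻¹ * p ^ (1 - n : ℤ)) p n := by
  have hscalar : (-a) ^ n * p ^ (n.choose 2) = ∏ j ∈ range n, (-a * p ^ j) := by
    rw [prod_mul_distrib, prod_const, card_range, prod_pow_eq_pow_sum, sum_range_id,
      Nat.choose_two_right]
  rw [hscalar, qp, qp, ← prod_range_reflect (fun j ↦ 1 - a⁻¹ * p ^ (1 - n : ℤ) * p ^ j),
    ← prod_mul_distrib]
  refine prod_congr rfl fun j hj ↦ ?_
  have hpow : p ^ (1 - n : ℤ) * p ^ (n - 1 - j) * p ^ j = 1 := by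
    simp only [← zpow_natCast, ← zpow_add₀ hp]
    convert zpow_zero p using 2
    have := mem_range.mp hj
    lia
  linear_combination -(a * a⁻¹) * hpow - mul_inv_cancel₀ ha

lemma qp_self_ne_zero {p : ℝ} (hp : 0 ≤ p) (hp1 : p ≠ 1) (n : ℕ) : qp (p : ℂ) p n ≠ 0 := by
  refine prod_ne_zero_iff.mpr fun j _ ↦ sub_ne_zero.mpr ?_
  rw [← pow_succ']
  exact_mod_cast (mt (pow_eq_one_iff_of_nonneg hp j.succ_ne_zero).mp hp1) ∘ Eq.symm

lemma coeff_succ_esymmGen_pow_mul (p : ℂ) (N k : ℕ) :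
    (esymmGen (fun j ↦ p ^ j) N).coeff (k + 1) * (1 - p ^ (k + 1)) =
      (esymmGen (fun j ↦ p ^ j) N).coeff k * (p ^ k - p ^ N) := by
  have hfun : (1 + C 1 * X) * esymmGen (fun j ↦ p ^ j * p) N =
      (1 + C (p ^ N) * X) * esymmGen (fun j ↦ p ^ j) N := by
    rw [← esymmGen_succ, esymmGen, esymmGen, prod_range_succ']
    simp [pow_succ, mul_comm]
  have hcoeff := congr_arg (coeff · (k + 1)) hfun
  simp only [coeff_one_add_C_mul_X_mul, coeff_X_mul, coeff_esymmGen_mul_right] at hcoeff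
  linear_combination -hcoeff

lemma coeff_esymmGen_pow_mul_qp {p : ℂ} (hp : p ≠ 0) (N k : ℕ) :
    (esymmGen (fun j ↦ p ^ j) N).coeff k * qp p p k =
      (-p ^ N) ^ k * qp (p ^ (-N : ℤ)) p k := by
  induction k with
  | zero => simp [coeff_zero_esymmGen, qp]
  | succ k ih =>
    have hcancel : p ^ N * p ^ (-N : ℤ) = 1 := by
      rw [_root_.zpow_neg, zpow_natCast, mul_inv_cancel₀ (pow_ne_zero N hp)]
    rw [qp_succ, qp_succ, ← pow_succ', pow_succ]
    linear_combination qp p p k * coeff_succ_esymmGen_pow_mul p N k + (p ^ k - p ^ N) * ih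
      - (-p ^ N) ^ k * qp (p ^ (-N : ℤ)) p k * p ^ k * hcancel

lemma coeff_esymmGen_pow_mul_qp_eq_choose {p : ℂ} (hp : p ≠ 0) (N k : ℕ) :
    (esymmGen (fun j ↦ p ^ j) N).coeff k * qp p p k =
      p ^ (k.choose 2) * qp (p ^ (N + 1 - k : ℤ)) p k := by
  have hcancel : p ^ N * p ^ (-N : ℤ) = 1 := by
    rw [_root_.zpow_neg, zpow_natCast, mul_inv_cancel₀ (pow_ne_zero N hp)]
  rw [coeff_esymmGen_pow_mul_qp hp, qp_eq_mul_qp_inv (zpow_ne_zero _ hp) hp,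
    show (p ^ (-N : ℤ))⁻¹ * p ^ (1 - k : ℤ) = p ^ (N + 1 - k : ℤ) by
      rw [← _root_.zpow_neg, ← zpow_add₀ hp]; congr 1; ring,
    mul_assoc ((-p ^ (-N : ℤ)) ^ k), ← mul_assoc, ← mul_pow, neg_mul_neg, hcancel, one_pow, one_mul]

end QShiftedFactorial

section Weight

/-- The inverse Gaussian binomial coefficient `(p;p)_n (p;p)_{L-n} / (p;p)_L`. -/
def qChooseInv (p : ℂ) (L n : ℕ) : ℂ := qp p p n * qp p p (L - n) / qp p p L

/-- The diagonal scaling `(-1)^n q^{-n²} / [L, n]_{q²}` that carries the Bezoutian to the weight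
`W`, up to the factor `q^{-L}`. -/
def weightScale (q : ℂ) (L n : ℕ) : ℂ := (-1) ^ n * q ^ (-(n : ℤ) ^ 2) * qChooseInv (q ^ 2) L n

lemma star_weightScale (q : ℂ) (L n : ℕ) : star (weightScale q L n) = weightScale (star q) L n := by
  simp [weightScale, qChooseInv, star_qp]

lemma qChooseInv_mul_coeff_esymmGen {p : ℂ} (hp : p ≠ 0) (hqp : ∀ n, qp p p n ≠ 0) {L m : ℕ}
    (hm : m ≤ L) (k : ℕ) :
    qChooseInv p L m * (esymmGen (fun j ↦ p ^ j) (L + 1)).coeff (m + 1 + k) =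
      (-p ^ (L + 1)) ^ k * p ^ ((m + 1).choose 2) * ((1 - p ^ (L + 1)) / (1 - p ^ (m + 1))) *
        (qp (p ^ (m - L : ℤ)) p k / qp (p ^ (m + 2)) p k) := by
  have hnum : qp p p (L - m) * qp (p ^ ((L + 1 : ℕ) + 1 - (m + 1 : ℕ) : ℤ)) p (m + 1) =
      qp p p L * (1 - p ^ (L + 1)) := by
    rw [show ((L + 1 : ℕ) + 1 - (m + 1 : ℕ) : ℤ) = (L - m + 1 : ℕ) by lia, zpow_natCast, pow_succ',
      qp_mul_qp, ← add_assoc, Nat.sub_add_cancel hm, qp_succ, ← pow_succ']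
  have hden : qp p p m * (1 - p ^ (m + 1)) * qp (p ^ (m + 2)) p k = qp p p (m + 1 + k) := by
    rw [← qp_mul_qp, qp_succ, ← pow_succ', ← pow_succ']
  have hcoeff : (esymmGen (fun j ↦ p ^ j) (L + 1)).coeff (m + 1 + k) * qp p p (m + 1 + k) =
      (-p ^ (L + 1)) ^ k * p ^ ((m + 1).choose 2) *
        qp (p ^ ((L + 1 : ℕ) + 1 - (m + 1 : ℕ) : ℤ)) p (m + 1) * qp (p ^ (m - L : ℤ)) p k := by
    rw [coeff_esymmGen_pow_mul_qp hp, ← qp_mul_qp, pow_add, mul_mul_mul_comm,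
      ← coeff_esymmGen_pow_mul_qp hp, coeff_esymmGen_pow_mul_qp_eq_choose hp,
      ← zpow_natCast p (m + 1), ← zpow_add₀ hp,
      show (-(L + 1 : ℕ) + (m + 1 : ℕ) : ℤ) = m - L by push_cast; ring]
    ring
  have hne : qp p p m * (1 - p ^ (m + 1)) * qp (p ^ (m + 2)) p k ≠ 0 := hden ▸ hqp _
  have hlast := right_ne_zero_of_mul hne
  have hfactor := right_ne_zero_of_mul (left_ne_zero_of_mul hne)
  rw [← hden] at hcoeff
  rw [qChooseInv]
  field_simp [hqp L]
  linear_combination qp p p (L - m) * hcoeff +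
    (-p ^ (L + 1)) ^ k * p ^ ((m + 1).choose 2) * qp (p ^ (m - L : ℤ)) p k * hnum

lemma sq_pow_choose_two (q : ℂ) (n : ℕ) : (q ^ 2) ^ (n.choose 2) = q ^ ((n : ℤ) ^ 2 - n) := by
  have h : 2 * n.choose 2 = n * (n - 1) := by
    rw [Nat.choose_two_right, Nat.mul_div_cancel' (Nat.even_mul_pred_self n).two_dvd]
  rw [← pow_mul, h, ← zpow_natCast]
  congr 1
  cases n with
  | zero => simp
  | succ n =>
    push_cast
    ring_nf

lemma sq_zpow (q : ℂ) (e : ℤ) : (q ^ 2) ^ e = q ^ (2 * e) := by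
  rw [← zpow_natCast, ← _root_.zpow_mul, Nat.cast_ofNat]

lemma coeff_esymmGen_sq_pow {q : ℂ} (hq : q ≠ 0) (hqp : ∀ n, qp (q ^ 2) (q ^ 2) n ≠ 0) (L t : ℕ) :
    (esymmGen (fun j ↦ (q ^ 2) ^ j) (L + 1)).coeff t = q ^ ((t : ℤ) ^ 2 - t) *
      (qp (q ^ (2 * (L : ℤ) + 4 - 2 * t)) (q ^ 2) t / qp (q ^ 2) (q ^ 2) t) := by
  rw [← mul_div_assoc, eq_div_iff (hqp t),
    coeff_esymmGen_pow_mul_qp_eq_choose (pow_ne_zero 2 hq), sq_zpow, sq_pow_choose_two]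
  congr! 3
  push_cast
  ring

lemma qChooseInv_mul_coeff_esymmGen_sq_pow {q : ℂ} (hq : q ≠ 0)
    (hqp : ∀ n, qp (q ^ 2) (q ^ 2) n ≠ 0) {L m : ℕ} (hm : m ≤ L) (k : ℕ) :
    qChooseInv (q ^ 2) L m * (esymmGen (fun j ↦ (q ^ 2) ^ j) (L + 1)).coeff (m + 1 + k) =
      (-1) ^ k * q ^ (2 * (L + 1) * k : ℤ) * q ^ ((m : ℤ) ^ 2 + m) *
        ((1 - q ^ (2 * (L : ℤ) + 2)) / (1 - q ^ (2 * (m : ℤ) + 2))) *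
        (qp (q ^ (2 * (m : ℤ) - 2 * L)) (q ^ 2) k / qp (q ^ (2 * (m : ℤ) + 4)) (q ^ 2) k) := by
  rw [qChooseInv_mul_coeff_esymmGen (pow_ne_zero 2 hq) hqp hm, sq_pow_choose_two, neg_pow,
    ← pow_mul]
  simp only [← zpow_natCast (q ^ 2), sq_zpow]
  push_cast
  ring_nf

lemma alphaC_eq {q : ℂ} (hq : q ≠ 0) (hqp : ∀ n, qp (q ^ 2) (q ^ 2) n ≠ 0) {L m n t : ℕ}
    (hm : m ≤ L) (ht : t ≤ n) :
    alphaC q L m n t = q ^ (-L : ℤ) * (weightScale q L m * weightScale q L n) *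
      ((esymmGen (fun j ↦ (q ^ 2) ^ j) (L + 1)).coeff t *
        (esymmGen (fun j ↦ (q ^ 2) ^ j) (L + 1)).coeff (m + n + 1 - t)) := by
  obtain ⟨k, rfl⟩ := Nat.exists_eq_add_of_le ht
  have hexp : q ^ (2 * ((t + k : ℕ) : ℤ) * (L + 1) - ((t + k : ℕ) : ℤ) ^ 2 - (2 * L + 3) * t +
      (t : ℤ) ^ 2 - L + m) = q ^ (-L : ℤ) * q ^ (-(m : ℤ) ^ 2) * q ^ (-((t + k : ℕ) : ℤ) ^ 2) *
        q ^ (2 * (L + 1) * k : ℤ) * q ^ ((m : ℤ) ^ 2 + m) * q ^ ((t : ℤ) ^ 2 - t) := by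
    simp only [← zpow_add₀ hq]
    congr 1
    push_cast
    ring
  have hsign : (-1 : ℂ) ^ ((m : ℤ) - t) = (-1) ^ m * (-1) ^ (t + k) * (-1) ^ k := by
    have hk : (-1 : ℂ) ^ k * (-1) ^ k = 1 := by rw [← mul_pow, neg_one_mul, neg_neg, one_pow]
    rw [zpow_sub₀ (by simp), zpow_natCast, zpow_natCast, div_eq_mul_inv, ← inv_pow, inv_neg_one,
      pow_add, ← mul_assoc, mul_assoc _ _ ((-1 : ℂ) ^ k), hk, mul_one]
  calc alphaC q L m (t + k) t
      = q ^ (-L : ℤ) * ((-1) ^ m * q ^ (-(m : ℤ) ^ 2)) * weightScale q L (t + k) *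
          (qChooseInv (q ^ 2) L m *
            (esymmGen (fun j ↦ (q ^ 2) ^ j) (L + 1)).coeff (m + 1 + k)) *
          (esymmGen (fun j ↦ (q ^ 2) ^ j) (L + 1)).coeff t := by
        rw [qChooseInv_mul_coeff_esymmGen_sq_pow hq hqp hm, coeff_esymmGen_sq_pow hq hqp, alphaC,
          hexp, hsign, Nat.add_sub_cancel_left, weightScale, qChooseInv]
        ring
    _ = _ := by
        rw [show m + (t + k) + 1 - t = m + 1 + k by lia]
        simp only [weightScale]
        ring

lemma Wm_apply_comm (q : ℂ) (L : ℕ) (x : ℂ) (i j : Fin (L + 1)) : Wm q L x i j = Wm q L x j i := by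
  simp only [Wm, Matrix.of_apply, min_comm (j : ℕ) i, max_comm (j : ℕ) i, min_comm (j : ℤ) i,
    max_comm (j : ℤ) i]

lemma Wm_apply_of_le {q : ℂ} (hq : q ≠ 0) (hqp : ∀ n, qp (q ^ 2) (q ^ 2) n ≠ 0) {L : ℕ} (x : ℂ)
    {i j : Fin (L + 1)} (hij : i ≤ j) :
    Wm q L x i j = q ^ (-L : ℤ) * (weightScale q L i * weightScale q L j) *
      chebBezoutian (esymmGen (fun j ↦ (q ^ 2) ^ j) (L + 1)) x i j := by
  have hmin : min (i : ℕ) j = i := min_eq_left hij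
  have hmax : max (i : ℕ) j = j := max_eq_right hij
  simp only [Wm, Matrix.of_apply, ← Nat.cast_min, ← Nat.cast_max, hmin, hmax]
  rw [chebBezoutian, mul_sum]
  refine sum_congr rfl fun t ht ↦ ?_
  rw [alphaC_eq hq hqp (Fin.is_le i) (mem_range_succ_iff.mp ht), mul_assoc _ (_ * _)]

lemma Wm_eq_smul_diagonal_mul_mul_diagonal {q x z : ℂ} (hq : q ≠ 0)
    (hqp : ∀ n, qp (q ^ 2) (q ^ 2) n ≠ 0) (hz : z ≠ 0) (hx : 2 * x = z + z⁻¹) (L : ℕ) :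
    Wm q L x = q ^ (-L : ℤ) • (diagonal (fun i : Fin (L + 1) ↦ weightScale q L i) *
      (Matrix.of fun m n : Fin (L + 1) ↦
        chebBezoutian (esymmGen (fun j ↦ (q ^ 2) ^ j) (L + 1)) x m n) *
      diagonal fun i : Fin (L + 1) ↦ weightScale q L i) := by
  ext i j
  rw [Matrix.smul_apply, mul_diagonal, diagonal_mul, Matrix.of_apply, smul_eq_mul]
  rcases le_total i j with hij | hji
  · rw [Wm_apply_of_le hq hqp x hij]
    ring
  · rw [Wm_apply_comm, Wm_apply_of_le hq hqp x hji,
      chebBezoutian_esymmGen_comm _ hz hx]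
    ring

lemma weightScale_ne_zero {q : ℂ} (hq : q ≠ 0) (hqp : ∀ n, qp (q ^ 2) (q ^ 2) n ≠ 0) (L n : ℕ) :
    weightScale q L n ≠ 0 :=
  mul_ne_zero (mul_ne_zero (pow_ne_zero _ (neg_ne_zero.mpr one_ne_zero)) (zpow_ne_zero _ hq))
    (div_ne_zero (mul_ne_zero (hqp _) (hqp _)) (hqp _))

theorem posDef_Wm {q : ℝ} (hq0 : 0 < q) (hq1 : q ≠ 1) (L : ℕ) {x : ℝ} (hx₁ : -1 ≤ x)
    (hx₂ : x ≤ 1) : (Wm (q : ℂ) L x).PosDef := by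
  have hq : (q : ℂ) ≠ 0 := Complex.ofReal_ne_zero.mpr hq0.ne'
  have hsq1 : q ^ 2 ≠ 1 := (pow_eq_one_iff_of_nonneg hq0.le two_ne_zero).not.mpr hq1
  have hqp (n : ℕ) : qp ((q : ℂ) ^ 2) ((q : ℂ) ^ 2) n ≠ 0 := by
    exact_mod_cast qp_self_ne_zero (sq_nonneg q) hsq1 n
  obtain ⟨z, hz, hxz⟩ := exists_norm_eq_one_two_mul_eq_add_inv hx₁ hx₂
  have hz0 : z ≠ 0 := norm_ne_zero_iff.mp (hz ▸ one_ne_zero)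
  have hB := posDef_chebBezoutian_esymmGen (fun i ↦ pow_pos (pow_pos hq0 2) i)
    (pow_right_injective₀ (pow_pos hq0 2) hsq1) hx₁ hx₂ (L + 1)
  push_cast at hB
  let D : Matrix (Fin (L + 1)) (Fin (L + 1)) ℂ := diagonal fun i ↦ weightScale q L i
  have hDstar : Dᴴ = D := by
    rw [diagonal_conjTranspose]
    congr 1
    ext i
    simp [star_weightScale]
  have hD : IsUnit D := by
    rw [isUnit_iff_isUnit_det, det_diagonal]
    exact (prod_ne_zero_iff.mpr fun (i : Fin (L + 1)) _ ↦ weightScale_ne_zero hq hqp L i).isUnit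
  have hqL : (0 : ℂ) < (q : ℂ) ^ (-L : ℤ) := by exact_mod_cast zpow_pos hq0 _
  rw [Wm_eq_smul_diagonal_mul_mul_diagonal hq hqp hz0 hxz]
  have hDBD := hB.conjTranspose_mul_mul_same (mulVec_injective_of_isUnit hD)
  rw [hDstar] at hDBD
  exact hDBD.smul hqL

end Weight

theorem stmt9_general (q : ℝ) (hq0 : 0 < q) (hq1 : q ≠ 1) (L : ℕ) :
    (∀ x : ℝ, -1 ≤ x → x ≤ 1 →
        (∀ i j : Fin (L + 1), (Wm (q : ℂ) L (x : ℂ) i j).im = 0) ∧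
          (Wm (q : ℂ) L (x : ℂ))ᵀ = Wm (q : ℂ) L (x : ℂ) ∧
          (Wm (q : ℂ) L (x : ℂ)).PosDef) ∧
      ∀ x : ℝ, -1 < x → x < 1 →
        (((Real.sqrt (1 - x ^ 2) : ℝ) : ℂ) • Wm (q : ℂ) L (x : ℂ)).PosDef := by
  refine ⟨fun x hx₁ hx₂ ↦ ?_, fun x hx₁ hx₂ ↦ ?_⟩
  · have hW := posDef_Wm hq0 hq1 L hx₁ hx₂
    refine ⟨fun i j ↦ Complex.conj_eq_iff_im.mp ?_,
      Matrix.ext fun i j ↦ Wm_apply_comm (q : ℂ) L x j i, hW⟩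
    have hherm : star (Wm (q : ℂ) L x j i) = Wm (q : ℂ) L x i j := hW.isHermitian.apply i j
    rwa [Wm_apply_comm (q : ℂ) L x j i] at hherm
  · refine (posDef_Wm hq0 hq1 L hx₁.le hx₂.le).smul ?_
    have hsqrt : 0 < Real.sqrt (1 - x ^ 2) := Real.sqrt_pos.mpr (by nlinarith)
    exact_mod_cast hsqrt

/-- for every `x ∈ [-1,1]` the matrix `W(x)` is real, symmetric and
strictly positive definite; in particular `W(x)√(1-x²)` is strictly positive definite
for every `x ∈ (-1,1)`. -/
theorem stmt9 (q : ℝ) (hq0 : 0 < q) (hq1 : q < 1) (L : ℕ) :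
    (∀ x : ℝ, -1 ≤ x → x ≤ 1 →
        (∀ i j : Fin (L + 1), (Wm (q : ℂ) L (x : ℂ) i j).im = 0) ∧
          (Wm (q : ℂ) L (x : ℂ))ᵀ = Wm (q : ℂ) L (x : ℂ) ∧
          (Wm (q : ℂ) L (x : ℂ)).PosDef) ∧
      ∀ x : ℝ, -1 < x → x < 1 →
        (((Real.sqrt (1 - x ^ 2) : ℝ) : ℂ) • Wm (q : ℂ) L (x : ℂ)).PosDef :=
  stmt9_general q hq0 hq1.ne L

end
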